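/- Let N be a finite set, P : N × N → [0,1] a row-stochastic matrix (Σ_{j∈N} P(i,j) = 1 for all i), μ a probability distribution on N, and let 0 ≤ t < T be integers. Consider the Markov path pmf on N^{T+1} given by p(x_0,…,x_T) = μ(x_0)·∏_{i=0}^{T−1} P(x_i, x_{i+1}). Let f : {0,…,t} → {ON, OFF} with f(0) = ON, let τ(i) = max{ j ≤ i : f(j) = ON }, and let B = { i ∈ {0,…,t} : f(i) = ON } ∪ {t+1, …, T}. Let 𝒬_0,…,𝒬_t be finite sets and for each i let w_i assign to each triple (a,b,c) ∈ N³ a probability distribution w_i(·|a,b,c) on 𝒬_i. Define the joint pmf of (X_0,…,X_T,Q_0,…,Q_t) by Pr(x, q_0,…,q_t) = p(x)·∏_{i=0}^{t} w_i(q_i | x_{τ(i)}, x_i, x_{i+1}). If for every i ∈ {0,…,t} the random variable Q_i is independent of U_i := (X_{τ(i)}, X_{i+1}) under this joint law, then the tuple (Q_0,…,Q_t) is independent of the tuple (X_j : j ∈ B). (Finite-horizon form of Lemma 1 of the paper.) -/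

import Mathlib

open Finset

/-!
Fix `i` and condition on `U_i = (X_{τ(i)}, X_{i+1})`. By the Markov property the states strictly
between times `τ(i)` and `i + 1` are then independent of all other states, and `Q_i` is generated
from these states and `U_i`. Since `Q_i` is independent of `U_i`, it is therefore independent of
everything generated from the remaining states. No `j ∈ B` lies strictly between `τ(i)` and
`i + 1`, and neither does any of the times that a later query `Q_k`, `k > i`, looks at. So `Q_i` is
independent of `((X_j)_{j ∈ B}, (Q_k)_{k > i})`, and the queries split off one by one, the earliest
first.
-/

section Screening

variable {ι γ : Type*} {α : ι → Type*} [DecidableEq ι] {s : Finset ι}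
  {β : (∀ i, α i) → γ} {p : (∀ i, α i) → ℝ}

/-- Conditional independence, under the weight `p`, of the coordinates in `s` and the coordinates
outside `s` given the statistic `β` of the latter. It is encoded without division: exchanging the
`s`-coordinates of two configurations with the same value of `β` preserves the product of their
weights. -/
structure ScreensOff (β : (∀ i, α i) → γ) (s : Finset ι) (p : (∀ i, α i) → ℝ) : Prop where
  dependsOn : DependsOn β (s : Set ι)ᶜ
  mul_eq : ∀ x y, β x = β y → p (s.piecewise x y) * p (s.piecewise y x) = p x * p y

lemma apply_piecewise_of_dependsOn_compl {δ : Type*} {G : (∀ i, α i) → δ}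
    (hG : DependsOn G (s : Set ι)ᶜ) (x y : ∀ i, α i) : G (s.piecewise x y) = G y :=
  hG fun _ hi ↦ s.piecewise_eq_of_notMem x y hi

variable [Fintype ι] [∀ i, Fintype (α i)] [DecidableEq γ]

lemma ScreensOff.sum_mul_sum_fiber (h : ScreensOff β s p) {G V : (∀ i, α i) → ℝ}
    (hG : DependsOn G (s : Set ι)ᶜ) (hV : ∀ x y, β x = β y → V (s.piecewise x y) = V x) (b : γ) :
    (∑ x with β x = b, p x * (G x * V x)) * ∑ x with β x = b, p x =
      (∑ x with β x = b, p x * G x) * ∑ x with β x = b, p x * V x := by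
  simp only [sum_mul_sum, ← sum_product']
  let fiber : Finset (∀ i, α i) := {x | β x = b}
  let exchange (z : (∀ i, α i) × (∀ i, α i)) := (s.piecewise z.2 z.1, s.piecewise z.1 z.2)
  have exchange_mem : ∀ z ∈ fiber ×ˢ fiber, exchange z ∈ fiber ×ˢ fiber := by
    simp [fiber, exchange, apply_piecewise_of_dependsOn_compl h.dependsOn]
  have exchange_exchange (z) : exchange (exchange z) = z := by
    simp [exchange, piecewise_same]
  refine sum_nbij' exchange exchange exchange_mem exchange_mem
    (fun z _ ↦ exchange_exchange z) (fun z _ ↦ exchange_exchange z) ?_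
  rintro ⟨x, y⟩ hz
  obtain ⟨hx, hy⟩ : β x = b ∧ β y = b := by simpa using hz
  have hxy : β x = β y := hx.trans hy.symm
  simp only [exchange, apply_piecewise_of_dependsOn_compl hG, hV x y hxy]
  linear_combination -(G x * V x) * h.mul_eq x y hxy

lemma ScreensOff.sum_mul_eq (h : ScreensOff β s p) (hp : ∀ x, 0 ≤ p x)
    {G V : (∀ i, α i) → ℝ} {r : ℝ}
    (hG : DependsOn G (s : Set ι)ᶜ) (hV : ∀ x y, β x = β y → V (s.piecewise x y) = V x)
    (hr : ∀ b, ∑ x with β x = b, p x * V x = (∑ x with β x = b, p x) * r) :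
    ∑ x, p x * (G x * V x) = (∑ x, p x * G x) * r := by
  have hβ : ∀ x ∈ univ, β x ∈ univ.image β := fun x hx ↦ mem_image_of_mem β hx
  rw [← sum_fiberwise_of_maps_to hβ, ← sum_fiberwise_of_maps_to hβ, sum_mul]
  refine sum_congr rfl fun b _ ↦ ?_
  obtain hmass | hmass := eq_or_ne (∑ x with β x = b, p x) 0
  · have hnull : ∀ x ∈ ({x | β x = b} : Finset _), p x = 0 :=
      (sum_eq_zero_iff_of_nonneg fun x _ ↦ hp x).1 hmass
    rw [sum_eq_zero fun x hx ↦ by rw [hnull x hx, zero_mul],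
      sum_eq_zero fun x hx ↦ by rw [hnull x hx, zero_mul], zero_mul]
  · refine mul_right_cancel₀ hmass ?_
    rw [h.sum_mul_sum_fiber hG hV, hr]
    ring

end Screening

section Joint

variable {Ω κ : Type*} {Q : κ → Type*}

/-- The probability of the event `E` for the pair of variables with joint mass function `ρ`. -/
def prob {Θ : Type*} [Fintype Ω] [Fintype Θ] (ρ : Ω → Θ → ℝ) (E : Ω → Θ → Prop)
    [∀ ω θ, Decidable (E ω θ)] : ℝ :=
  ∑ ω, ∑ θ, if E ω θ then ρ ω θ else 0

variable [Fintype κ]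

/-- The joint mass function of `ω`, drawn from `p`, and of queries `q k`, drawn independently of
each other from `V k ω`. -/
def queryLaw (p : Ω → ℝ) (V : ∀ k, Ω → Q k → ℝ) (ω : Ω) (q : ∀ k, Q k) : ℝ :=
  p ω * ∏ k, V k ω (q k)

variable [DecidableEq κ] [∀ k, Fintype (Q k)]

lemma sum_prod_eqOn [∀ k, DecidableEq (Q k)] {g : ∀ k, Q k → ℝ} (hg : ∀ k, ∑ c, g k c = 1)
    (S : Finset κ) (v : ∀ k, Q k) :
    ∑ q : ∀ k, Q k with ∀ k ∈ S, q k = v k, ∏ k, g k (q k) = ∏ k ∈ S, g k (v k) := by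
  have cylinder : ({q | ∀ k ∈ S, q k = v k} : Finset (∀ k, Q k)) =
      Fintype.piFinset fun k ↦ if k ∈ S then {v k} else univ := by
    ext q
    simp only [mem_filter_univ, Fintype.mem_piFinset]
    refine forall_congr' fun k ↦ ?_
    split_ifs with hk <;> simp [hk]
  rw [cylinder, ← prod_univ_sum, ← Fintype.prod_ite_mem S]
  refine prod_congr rfl fun k _ ↦ ?_
  split_ifs <;> simp [hg]

lemma prob_queryLaw [Fintype Ω] {p : Ω → ℝ} {V : ∀ k, Ω → Q k → ℝ} (hV : ∀ k ω, ∑ c, V k ω c = 1)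
    (A : Ω → Prop) [DecidablePred A] (S : Finset κ) (v : ∀ k, Q k)
    {E : Ω → (∀ k, Q k) → Prop} [∀ ω q, Decidable (E ω q)]
    (hE : ∀ ω q, E ω q ↔ A ω ∧ ∀ k ∈ S, q k = v k) :
    prob (queryLaw p V) E = ∑ ω with A ω, p ω * ∏ k ∈ S, V k ω (v k) := by
  classical
  simp only [prob, queryLaw, hE, sum_filter]
  refine sum_congr rfl fun ω _ ↦ ?_
  split_ifs with hω
  · simp only [hω, true_and, ← sum_filter, ← mul_sum, sum_prod_eqOn (hV · ω)]
  · simp [hω]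

end Joint

section Independence

variable {ι κ γ : Type*} {α : ι → Type*} [Fintype ι] [DecidableEq ι] [∀ i, Fintype (α i)]
  [DecidableEq γ] [LinearOrder κ] {s : κ → Finset ι} {β : κ → (∀ i, α i) → γ}
  {p : (∀ i, α i) → ℝ}

lemma sum_mul_prod_eq_of_screensOff (hp : ∀ x, 0 ≤ p x) (h : ∀ k, ScreensOff (β k) (s k) p)
    {V : κ → (∀ i, α i) → ℝ} {r : κ → ℝ}
    (hV : ∀ k x y, β k x = β k y → V k ((s k).piecewise x y) = V k x)
    (hlater : ∀ i k, i < k → DependsOn (V k) (s i : Set ι)ᶜ)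
    (hr : ∀ k b, ∑ x with β k x = b, p x * V k x = (∑ x with β k x = b, p x) * r k)
    {C : (∀ i, α i) → ℝ} (hC : ∀ k, DependsOn C (s k : Set ι)ᶜ) (S : Finset κ) :
    ∑ x, p x * (C x * ∏ k ∈ S, V k x) = (∑ x, p x * C x) * ∏ k ∈ S, r k := by
  induction S using Finset.induction_on_min with
  | empty => simp
  | insert i S hi ih =>
    have hiS : i ∉ S := fun hmem ↦ (hi i hmem).false
    have hG : DependsOn (fun x ↦ C x * ∏ k ∈ S, V k x) (s i : Set ι)ᶜ := fun x y hxy ↦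
      congrArg₂ (· * ·) (hC i hxy) (prod_congr rfl fun k hk ↦ hlater i k (hi k hk) hxy)
    calc ∑ x, p x * (C x * ∏ k ∈ insert i S, V k x)
        = ∑ x, p x * ((C x * ∏ k ∈ S, V k x) * V i x) := by
          simp only [prod_insert hiS, mul_comm (V i _), mul_assoc]
      _ = (∑ x, p x * (C x * ∏ k ∈ S, V k x)) * r i := (h i).sum_mul_eq hp hG (hV i) (hr i)
      _ = (∑ x, p x * C x) * ∏ k ∈ insert i S, r k := by
          rw [ih, prod_insert hiS, mul_assoc, mul_comm (r i)]

variable [Fintype κ] {Q : κ → Type*} [∀ k, Fintype (Q k)] [∀ k, DecidableEq (Q k)]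

theorem prob_and_eq_mul_of_screensOff (hp : ∀ x, 0 ≤ p x) (hp1 : ∑ x, p x = 1)
    (h : ∀ k, ScreensOff (β k) (s k) p)
    {V : ∀ k, (∀ i, α i) → Q k → ℝ} (hV1 : ∀ k x, ∑ c, V k x c = 1)
    (hV : ∀ k x y, β k x = β k y → V k ((s k).piecewise x y) = V k x)
    (hlater : ∀ i k, i < k → DependsOn (V k) (s i : Set ι)ᶜ)
    (hind : ∀ k b c, prob (queryLaw p V) (fun x q ↦ β k x = b ∧ q k = c) =
      prob (queryLaw p V) (fun x _ ↦ β k x = b) * prob (queryLaw p V) (fun _ q ↦ q k = c))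
    {A : (∀ i, α i) → Prop} [DecidablePred A] (hA : ∀ k, DependsOn A (s k : Set ι)ᶜ)
    (v : ∀ k, Q k) :
    prob (queryLaw p V) (fun x q ↦ A x ∧ q = v) =
      prob (queryLaw p V) (fun x _ ↦ A x) * prob (queryLaw p V) (fun _ q ↦ q = v) := by
  let r (k : κ) : ℝ := prob (queryLaw p V) fun _ q ↦ q k = v k
  have hr : ∀ k b, ∑ x with β k x = b, p x * V k x (v k) = (∑ x with β k x = b, p x) * r k := by
    intro k b
    have := hind k b (v k)
    rw [prob_queryLaw hV1 (β k · = b) {k} v (by simp),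
      prob_queryLaw hV1 (β k · = b) ∅ v (by simp)] at this
    simpa using this
  have split {C : (∀ i, α i) → ℝ} (hC : ∀ k, DependsOn C (s k : Set ι)ᶜ) :
      ∑ x, p x * (C x * ∏ k, V k x (v k)) = (∑ x, p x * C x) * ∏ k, r k :=
    sum_mul_prod_eq_of_screensOff hp h (fun k x y hxy ↦ congrFun (hV k x y hxy) _)
      (fun i k hik x y hxy ↦ congrFun (hlater i k hik hxy) _) hr hC univ
  have hjoint : ∑ x with A x, p x * ∏ k, V k x (v k) = (∑ x with A x, p x) * ∏ k, r k := by
    simpa [sum_filter] using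
      split (C := fun x ↦ if A x then 1 else 0) fun k x y hxy ↦ by simp only [hA k hxy]
  have hqueries : ∑ x, p x * ∏ k, V k x (v k) = ∏ k, r k := by
    simpa [hp1] using split (C := fun _ ↦ 1) fun _ _ _ _ ↦ rfl
  rw [prob_queryLaw hV1 A univ v (by simp [funext_iff]), prob_queryLaw hV1 A ∅ v (by simp),
    prob_queryLaw hV1 (fun _ ↦ True) univ v (by simp [funext_iff])]
  simp [hjoint, hqueries]

end Independence

section MarkovPath

variable {N : Type*} {T : ℕ}

/-- The weight of a path of a time-inhomogeneous Markov chain with initial weight `μ` and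
transition weight `P i` from time `i` to time `i + 1`. -/
def pathWeight (μ : N → ℝ) (P : Fin T → N → N → ℝ) (x : Fin (T + 1) → N) : ℝ :=
  μ (x 0) * ∏ i, P i (x i.castSucc) (x i.succ)

lemma pathWeight_nonneg {μ : N → ℝ} {P : Fin T → N → N → ℝ} (hμ : ∀ a, 0 ≤ μ a)
    (hP : ∀ i a b, 0 ≤ P i a b) (x : Fin (T + 1) → N) : 0 ≤ pathWeight μ P x :=
  mul_nonneg (hμ _) (prod_nonneg fun _ _ ↦ hP _ _ _)

lemma sum_pathWeight [Fintype N] (μ : N → ℝ) {P : Fin T → N → N → ℝ}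
    (hP : ∀ i a, ∑ b, P i a b = 1) : ∑ x, pathWeight μ P x = ∑ a, μ a := by
  induction T with
  | zero => simpa [pathWeight] using (Equiv.funUnique (Fin 1) N).sum_comp μ
  | succ T ih =>
    rw [← (Fin.snocEquiv fun _ ↦ N).sum_comp, Fintype.sum_prod_type_right,
      ← ih fun i ↦ hP i.castSucc]
    refine sum_congr rfl fun x _ ↦ ?_
    have pathWeight_snoc (b : N) : pathWeight μ P (Fin.snocEquiv (fun _ ↦ N) (b, x)) =
        pathWeight μ (fun i ↦ P i.castSucc) x * P (Fin.last T) (x (Fin.last T)) b := by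
      simp [pathWeight, Fin.prod_univ_castSucc, Fin.snocEquiv, mul_assoc, ← Fin.castSucc_succ]
    simp only [pathWeight_snoc, ← mul_sum, hP, mul_one]

lemma screensOff_pathWeight (μ : N → ℝ) (P : Fin T → N → N → ℝ) (a c : Fin (T + 1)) :
    ScreensOff (fun x ↦ (x a, x c)) (Ioo a c) (pathWeight μ P) where
  dependsOn x y hxy := Prod.ext (hxy a (by simp)) (hxy c (by simp))
  mul_eq x y hxy := by
    obtain ⟨ha, hc⟩ : x a = y a ∧ x c = y c := Prod.ext_iff.1 hxy
    have transition_mul (i : Fin T) :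
        P i ((Ioo a c).piecewise x y i.castSucc) ((Ioo a c).piecewise x y i.succ) *
            P i ((Ioo a c).piecewise y x i.castSucc) ((Ioo a c).piecewise y x i.succ) =
          P i (x i.castSucc) (x i.succ) * P i (y i.castSucc) (y i.succ) := by
      by_cases hi : i.castSucc ∈ Ioo a c <;> by_cases hi' : i.succ ∈ Ioo a c
      · simp only [piecewise_eq_of_mem, hi, hi']
      · have hxyi : x i.succ = y i.succ := by
          suffices i.succ = c by rw [this, hc]
          simp only [mem_Ioo, Fin.lt_def, Fin.val_castSucc, Fin.val_succ, Fin.ext_iff] at hi hi' ⊢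
          omega
        simp [hi, hi', hxyi, -mem_Ioo]
      · have hxyi : x i.castSucc = y i.castSucc := by
          suffices i.castSucc = a by rw [this, ha]
          simp only [mem_Ioo, Fin.lt_def, Fin.val_castSucc, Fin.val_succ, Fin.ext_iff] at hi hi' ⊢
          omega
        simp [hi, hi', hxyi, -mem_Ioo]
      · simp only [piecewise_eq_of_notMem, hi, hi', not_false_eq_true, mul_comm]
    have h0 : (0 : Fin (T + 1)) ∉ Ioo a c := by simp
    simp only [pathWeight, piecewise_eq_of_notMem _ _ _ h0]
    rw [mul_mul_mul_comm, mul_mul_mul_comm (μ (x 0)), ← prod_mul_distrib, ← prod_mul_distrib,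
      prod_congr rfl fun i _ ↦ transition_mul i, mul_comm (μ _)]

/-- The conditional law of query `k` given the path `x`: a probabilistic function `w k` of the state
at time `τ k` and of the states before and after transition `e k`. -/
def pathQuery {κ : Type*} {Q : κ → Type*} (τ : κ → Fin (T + 1)) (e : κ → Fin T)
    (w : ∀ k, N → N → N → Q k → ℝ) (k : κ) (x : Fin (T + 1) → N) : Q k → ℝ :=
  w k (x (τ k)) (x (e k).castSucc) (x (e k).succ)

section PathQuery

variable {κ : Type*} {Q : κ → Type*} {τ : κ → Fin (T + 1)} {e : κ → Fin T} {k : κ}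

lemma dependsOn_pathQuery (w : ∀ k, N → N → N → Q k → ℝ) (k : κ) :
    DependsOn (pathQuery τ e w k) {τ k, (e k).castSucc, (e k).succ} := fun x y hxy ↦ by
  simp [pathQuery, hxy]

lemma pathQuery_piecewise_Ioo (w : ∀ k, N → N → N → Q k → ℝ) (hτ : τ k ≤ (e k).castSucc)
    {x y : Fin (T + 1) → N} (hlast : x (τ k) = y (τ k)) (hnext : x (e k).succ = y (e k).succ) :
    pathQuery τ e w k ((Ioo (τ k) (e k).succ).piecewise x y) = pathQuery τ e w k x := by
  apply dependsOn_pathQuery w k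
  rintro j (rfl | rfl | rfl)
  · simp [hlast]
  · obtain heq | hlt := hτ.eq_or_lt
    · simp [← heq, hlast]
    · exact piecewise_eq_of_mem _ _ _ (mem_Ioo.2 ⟨hlt, Fin.castSucc_lt_succ⟩)
  · simp [hnext]

lemma dependsOn_pathQuery_compl_Ioo (w : ∀ k, N → N → N → Q k → ℝ) {a c : Fin (T + 1)}
    (hτ : τ k ∉ Ioo a c) (hc : c ≤ (e k).castSucc) :
    DependsOn (pathQuery τ e w k) (Ioo a c : Set (Fin (T + 1)))ᶜ := by
  refine (dependsOn_pathQuery w k).mono ?_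
  rintro j (rfl | rfl | rfl)
  · simpa using hτ
  · exact fun h ↦ (mem_Ioo.1 h).2.not_ge hc
  · exact fun h ↦ (mem_Ioo.1 h).2.not_ge (hc.trans Fin.castSucc_lt_succ.le)

end PathQuery

end MarkovPath

theorem lemma_one_general {N κ : Type*} [Fintype N] [DecidableEq N] [Fintype κ] [LinearOrder κ]
    {T : ℕ} {μ : N → ℝ} (hμ : ∀ a, 0 ≤ μ a) {P : Fin T → N → N → ℝ} (hP : ∀ i a b, 0 ≤ P i a b)
    (hmass : ∑ x, pathWeight μ P x = 1)
    {e : κ → Fin T} (he : StrictMono e) {τ : κ → Fin (T + 1)} (hτ : ∀ k, τ k ≤ (e k).castSucc)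
    (hnest : ∀ i k, i < k → τ k ∉ Ioo (τ i) (e i).succ)
    {B : Fin (T + 1) → Prop} [DecidablePred B] (hB : ∀ j, B j → ∀ k, j ∉ Ioo (τ k) (e k).succ)
    {Q : κ → Type*} [∀ k, Fintype (Q k)] [∀ k, DecidableEq (Q k)]
    {w : ∀ k, N → N → N → Q k → ℝ} (hw : ∀ k a b c, ∑ q, w k a b c q = 1)
    (hindep : ∀ k a b c,
      prob (queryLaw (pathWeight μ P) (pathQuery τ e w))
          (fun x q ↦ x (τ k) = a ∧ x (e k).succ = b ∧ q k = c) =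
        prob (queryLaw (pathWeight μ P) (pathQuery τ e w))
            (fun x _ ↦ x (τ k) = a ∧ x (e k).succ = b) *
          prob (queryLaw (pathWeight μ P) (pathQuery τ e w)) (fun _ q ↦ q k = c))
    (qv : ∀ k, Q k) (xv : Fin (T + 1) → N) :
    prob (queryLaw (pathWeight μ P) (pathQuery τ e w))
        (fun x q ↦ (∀ j, B j → x j = xv j) ∧ q = qv) =
      prob (queryLaw (pathWeight μ P) (pathQuery τ e w)) (fun x _ ↦ ∀ j, B j → x j = xv j) *
        prob (queryLaw (pathWeight μ P) (pathQuery τ e w)) (fun _ q ↦ q = qv) := by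
  refine prob_and_eq_mul_of_screensOff (V := pathQuery τ e w) (pathWeight_nonneg hμ hP) hmass
    (fun k ↦ screensOff_pathWeight μ P (τ k) (e k).succ) (fun k _ ↦ hw k _ _ _) ?_ ?_ ?_ ?_ qv
  · intro k x y hxy
    obtain ⟨hlast, hnext⟩ := Prod.ext_iff.1 hxy
    exact pathQuery_piecewise_Ioo w (hτ k) hlast hnext
  · intro i k hik
    exact dependsOn_pathQuery_compl_Ioo w (hnest i k hik) (Fin.succ_le_castSucc_iff.2 (he hik))
  · rintro k ⟨a, b⟩ c
    simpa only [Prod.mk.injEq, and_assoc] using hindep k a b c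
  · intro k x y hxy
    exact propext (forall₂_congr fun j hj ↦ by rw [hxy j (hB j hj k)])

/-- **Finite-horizon form of Lemma 1.** For the Markov path pmf and queries generated as
probabilistic functions of `(X_{τ(i)}, X_i, X_{i+1})` with fresh randomness, if each `Q_i`
is independent of `U_i = (X_{τ(i)}, X_{i+1})`, then `(Q_0,…,Q_t)` is independent of
`(X_j : j ∈ B)`, where `B = {i ≤ t : f(i) = ON} ∪ {t+1,…,T}`. -/
theorem lemma_one {N : Type*} [Fintype N] [DecidableEq N]
    (P : N → N → ℝ) (hP0 : ∀ i j, 0 ≤ P i j) (hP1 : ∀ i, ∑ j, P i j = 1)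
    (μ : N → ℝ) (hμ0 : ∀ i, 0 ≤ μ i) (hμ1 : ∑ i, μ i = 1)
    (t T : ℕ) (htT : t < T)
    (f : ℕ → Bool) (hf0 : f 0 = true)
    (τ : ℕ → ℕ)
    (hτ : ∀ i, i ≤ t → τ i ≤ i ∧ f (τ i) = true ∧ ∀ j, τ i < j → j ≤ i → f j = false)
    (Q : Fin (t + 1) → Type*) [∀ i, Fintype (Q i)] [∀ i, DecidableEq (Q i)]
    (w : (i : Fin (t + 1)) → N → N → N → Q i → ℝ)
    (hw0 : ∀ i a b c q, 0 ≤ w i a b c q)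
    (hw1 : ∀ i a b c, ∑ q, w i a b c q = 1)
    (p : (Fin (T + 1) → N) → ℝ)
    (hp : ∀ x, p x = μ (x 0) * ∏ i : Fin T, P (x i.castSucc) (x i.succ))
    (Pr : (Fin (T + 1) → N) → ((i : Fin (t + 1)) → Q i) → ℝ)
    (hPr : ∀ x q, Pr x q = p x * ∏ i : Fin (t + 1),
      w i (x ⟨τ i.val, by
              have h1 := i.isLt
              have h2 := (hτ i.val (by omega)).1
              omega⟩)
          (x ⟨i.val, by have h1 := i.isLt; omega⟩)
          (x ⟨i.val + 1, by have h1 := i.isLt; omega⟩)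
          (q i))
    (hindep : ∀ (i : Fin (t + 1)) (a b : N) (qi : Q i),
      (∑ x : Fin (T + 1) → N, ∑ q : (∀ j, Q j),
        if x ⟨τ i.val, by
              have h1 := i.isLt
              have h2 := (hτ i.val (by omega)).1
              omega⟩ = a
            ∧ x ⟨i.val + 1, by have h1 := i.isLt; omega⟩ = b ∧ q i = qi
        then Pr x q else 0)
      = (∑ x : Fin (T + 1) → N, ∑ q : (∀ j, Q j),
          if x ⟨τ i.val, by
                have h1 := i.isLt
                have h2 := (hτ i.val (by omega)).1
                omega⟩ = a
              ∧ x ⟨i.val + 1, by have h1 := i.isLt; omega⟩ = b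
          then Pr x q else 0)
        * (∑ x : Fin (T + 1) → N, ∑ q : (∀ j, Q j), if q i = qi then Pr x q else 0)) :
    ∀ (qv : (i : Fin (t + 1)) → Q i) (xv : Fin (T + 1) → N),
      (∑ x : Fin (T + 1) → N, ∑ q : (∀ j, Q j),
        if (∀ j : Fin (T + 1), ((j.val ≤ t ∧ f j.val = true) ∨ t + 1 ≤ j.val) → x j = xv j)
            ∧ q = qv
        then Pr x q else 0)
      = (∑ x : Fin (T + 1) → N, ∑ q : (∀ j, Q j),
          if (∀ j : Fin (T + 1), ((j.val ≤ t ∧ f j.val = true) ∨ t + 1 ≤ j.val) → x j = xv j)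
          then Pr x q else 0)
        * (∑ x : Fin (T + 1) → N, ∑ q : (∀ j, Q j), if q = qv then Pr x q else 0) := by
  obtain rfl : p = pathWeight μ fun _ ↦ P := funext hp
  have hτi (i : Fin (t + 1)) := hτ i (Nat.lt_succ_iff.1 i.isLt)
  let last (i : Fin (t + 1)) : Fin (T + 1) := ⟨τ i, by have := (hτi i).1; omega⟩
  have notMem_Ioo (i : Fin (t + 1)) (j : Fin (T + 1)) (hj : (j ≤ t ∧ f j = true) ∨ t + 1 ≤ j) :
      j ∉ Ioo (last i) (i.castLE htT).succ := fun hmem ↦ by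
    obtain ⟨hlast, hnext⟩ := mem_Ioo.1 hmem
    have hoff : f j = false := (hτi i).2.2 j hlast (Nat.lt_succ_iff.1 hnext)
    grind
  obtain rfl : Pr = queryLaw _ (pathQuery last (Fin.castLE htT) w) := funext₂ hPr
  exact lemma_one_general hμ0 (fun _ ↦ hP0) ((sum_pathWeight μ fun _ ↦ hP1).trans hμ1)
    (Fin.strictMono_castLE htT) (fun k ↦ (hτi k).1)
    (fun i k _ ↦ notMem_Ioo i (last k) (.inl ⟨(hτi k).1.trans (by omega), (hτi k).2.1⟩))
    (fun j hj i ↦ notMem_Ioo i j hj) hw1 hindep
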